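/- Let f(t) = exp(−1/t²) for t > 0 and f(t) = 0 for t ≤ 0. Then the series v(x,t) = Σ_{n=0}^∞ f^{(n)}(t/2) x^{2n+1}/(2n+1)! converges for all (x,t) with t > 0, defines a smooth solution of v_t = ½v_{xx}, satisfies v(0,t) = 0 for all t and v(x,t) → 0 as t → 0⁺ for each x, but v is not identically zero. -/

import Mathlib

/-- The flat function f(t) = exp(−1/t²) for t > 0 and f(t) = 0 for t ≤ 0. -/
noncomputable def flatF (t : ℝ) : ℝ := if 0 < t then Real.exp (-1 / t ^ 2) else 0

/-- The Tychonoff-type series v(x,t) = Σₙ f⁽ⁿ⁾(t/2) x^{2n+1}/(2n+1)!. -/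
noncomputable def vTychonoff (x t : ℝ) : ℝ :=
  ∑' n : ℕ, iteratedDeriv n flatF (t / 2) * x ^ (2 * n + 1) / ((2 * n + 1).factorial : ℝ)

noncomputable def cF (z : ℂ) : ℂ := Complex.exp (-1 / z ^ 2)

theorem cF_diff : DifferentiableOn ℂ cF {z : ℂ | z ≠ 0} := by
  intro z hz
  have hz : z ≠ 0 := hz
  unfold cF
  have : z ^ 2 ≠ 0 := pow_ne_zero _ hz
  apply DifferentiableAt.differentiableWithinAt
  fun_prop (disch := assumption)

theorem cF_iter_diff (n : ℕ) {z : ℂ} (hz : z ≠ 0) : HasDerivAt (iteratedDeriv n cF) (iteratedDeriv (n + 1) cF z) z := by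
  rw [iteratedDeriv_succ]
  apply DifferentiableAt.hasDerivAt
  have h1 : AnalyticAt ℂ cF z := cF_diff.analyticAt (isOpen_ne.mem_nhds hz)
  rw [iteratedDeriv_eq_iterate]
  exact (h1.iterated_deriv n).differentiableAt

theorem flat_iter (n : ℕ) : ∀ t : ℝ, 0 < t → iteratedDeriv n flatF t = (iteratedDeriv n cF t).re := by
  induction n with
  | zero =>
    intro t ht
    simp only [iteratedDeriv_zero, flatF, cF, if_pos ht]
    rw [← Complex.exp_ofReal_re]
    push_cast
    rfl
  | succ n ih =>
    intro t ht
    have h := (cF_iter_diff n (z := (t : ℂ)) (by exact_mod_cast ht.ne')).real_of_complex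
    rw [iteratedDeriv_succ, ← h.deriv]
    apply Filter.EventuallyEq.deriv_eq
    filter_upwards [Ioi_mem_nhds ht] with s hs
    exact ih s hs

theorem flat_hasDeriv (n : ℕ) {t : ℝ} (ht : 0 < t) :
    HasDerivAt (iteratedDeriv n flatF) (iteratedDeriv (n + 1) flatF t) t := by
  have h := (cF_iter_diff n (z := (t : ℂ)) (by exact_mod_cast ht.ne')).real_of_complex
  rw [flat_iter _ t ht]
  refine h.congr_of_eventuallyEq ?_
  filter_upwards [Ioi_mem_nhds ht] with s hs
  exact flat_iter n s hs

theorem cF_bound {t : ℝ} (ht : 0 < t) {z : ℂ} (hz : ‖z - t‖ ≤ t / 8) :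
    z ≠ 0 ∧ ‖cF z‖ ≤ Real.exp (-1 / (2 * t ^ 2)) := by
  have h0 : (t : ℂ) ≠ 0 := by exact_mod_cast ht.ne'
  have hnt : ‖(t : ℂ)‖ = t := by simp [abs_of_pos ht]
  have hlow : 7 * t / 8 ≤ ‖z‖ := by
    have := norm_sub_norm_le (t : ℂ) (t - z)
    rw [norm_sub_rev (t : ℂ) z, hnt] at this
    simp at this
    linarith
  have hz0 : z ≠ 0 := by
    rw [← norm_pos_iff]; linarith
  refine ⟨hz0, ?_⟩
  unfold cF
  rw [Complex.norm_exp]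
  apply Real.exp_le_exp.mpr
  have e : -1 / z ^ 2 = ((-1 / t ^ 2 : ℝ) : ℂ) + (z - t) * ((z - t) + 2 * t) / (z ^ 2 * t ^ 2) := by
    push_cast
    field_simp
    ring
  have hb : ‖(z - t) * ((z - t) + 2 * t) / (z ^ 2 * t ^ 2)‖ ≤ 1 / (2 * t ^ 2) := by
    rw [norm_div, norm_mul, norm_mul, norm_pow, norm_pow, hnt]
    have h2 : ‖(z - t) + 2 * t‖ ≤ t / 8 + 2 * t := by
      refine (norm_add_le _ _).trans ?_
      rw [norm_mul, hnt]
      simp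
      linarith
    rw [div_le_div_iff₀ (by positivity) (by positivity)]
    have h3 : ‖z - t‖ * ‖(z - t) + 2 * t‖ ≤ (t / 8) * (t / 8 + 2 * t) := by gcongr
    have h4 : (7 * t / 8) ^ 2 ≤ ‖z‖ ^ 2 := by gcongr
    have : ‖z - t‖ * ‖(z - t) + 2 * t‖ * 2 ≤ ‖z‖ ^ 2 := by nlinarith
    nlinarith [sq_nonneg t]
  rw [e, Complex.add_re, Complex.ofReal_re]
  have h5 := (Complex.re_le_norm _).trans hb
  have : (-1 / (2 * t ^ 2)) = -1 / t ^ 2 + 1 / (2 * t ^ 2) := by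
    field_simp; ring
  linarith

theorem flat_bound (n : ℕ) {t : ℝ} (ht : 0 < t) :
    |iteratedDeriv n flatF t| ≤ n.factorial * (8 / t) ^ n * Real.exp (-1 / (2 * t ^ 2)) := by
  rw [flat_iter n t ht]
  refine (Complex.abs_re_le_norm _).trans ?_
  have h := Complex.norm_iteratedDeriv_le_of_forall_mem_sphere_norm_le (f := cF) (c := (t : ℂ)) (R := t / 8)
    (C := Real.exp (-1 / (2 * t ^ 2))) n (by positivity) ?_ ?_
  · refine h.trans (le_of_eq ?_)
    rw [div_pow, div_pow]
    field_simp
  · apply DifferentiableOn.diffContOnCl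
    apply cF_diff.mono
    intro z hz
    rw [closure_ball _ (by positivity)] at hz
    exact (cF_bound ht (by simpa [dist_eq_norm] using hz)).1
  · intro z hz
    exact (cF_bound ht (by simpa [dist_eq_norm] using hz.le)).2

/-- j-th derivative of x^m/m! -/
noncomputable def EE (m j : ℕ) (x : ℝ) : ℝ := if j ≤ m then x ^ (m - j) / ((m - j).factorial : ℝ) else 0

theorem EE_deriv (m j : ℕ) (x : ℝ) : HasDerivAt (EE m j) (EE m (j + 1) x) x := by
  unfold EE
  rcases lt_trichotomy j m with h | h | h
  · rw [if_pos (by omega)]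
    simp only [if_pos h.le]
    obtain ⟨k, hk⟩ : ∃ k, m - j = k + 1 := ⟨m - j - 1, by omega⟩
    have hk' : m - (j + 1) = k := by omega
    rw [hk, hk']
    have := (hasDerivAt_pow (k + 1) x).div_const ((k + 1).factorial : ℝ)
    refine this.congr_deriv ?_
    rw [Nat.factorial_succ]
    push_cast
    field_simp
  · subst h
    simp
    exact hasDerivAt_const _ _
  · rw [if_neg (by omega)]
    simp only [if_neg (show ¬ j ≤ m by omega)]
    exact hasDerivAt_const _ _

theorem EE_bound (m j : ℕ) {x R : ℝ} (hR : 1 ≤ R) (hx : |x| ≤ R) :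
    |EE m j x| ≤ R ^ m * (2 ^ m * j.factorial) / m.factorial := by
  unfold EE
  split_ifs with h
  · rw [abs_div, abs_pow, Nat.abs_cast, div_le_div_iff₀ (by positivity) (by positivity), mul_assoc]
    have h1 : |x| ^ (m - j) ≤ R ^ m := by
      calc |x| ^ (m - j) ≤ R ^ (m - j) := by gcongr
        _ ≤ R ^ m := pow_le_pow_right₀ hR (by omega)
    have h2 : (m.factorial : ℝ) ≤ 2 ^ m * j.factorial * (m - j).factorial := by
      have := Nat.choose_mul_factorial_mul_factorial h
      rw [← this]
      push_cast
      gcongr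
      exact_mod_cast Nat.choose_le_two_pow m j
    gcongr
  · simp; positivity

/-- general term -/
noncomputable def TT (a j n : ℕ) (q : ℝ × ℝ) : ℝ :=
  iteratedDeriv (n + a) flatF (q.2 / 2) * EE (2 * n + 1) j q.1

noncomputable def BB (a j : ℕ) (R C : ℝ) (n : ℕ) : ℝ :=
  ((n + a).factorial * C ^ (n + a)) * (R ^ (2 * n + 1) * (2 ^ (2 * n + 1) * j.factorial) / (2 * n + 1).factorial)

theorem fact_ineq (n : ℕ) : (n.factorial * n.factorial : ℝ) ≤ (2 * n + 1).factorial := by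
  have h1 := Nat.factorial_mul_factorial_dvd_factorial_add n n
  have h2 := Nat.le_of_dvd (Nat.factorial_pos _) h1
  have h3 : (n + n).factorial ≤ (2 * n + 1).factorial := Nat.factorial_le (by omega)
  exact_mod_cast h2.trans h3

theorem BB_summable (a j : ℕ) {R C : ℝ} (hR : 1 ≤ R) (hC : 0 ≤ C) : Summable (BB a j R C) := by
  have hs := (Real.summable_pow_div_factorial (2 * C * (R ^ 2 * 4))).mul_left
    (a.factorial * 2 ^ a * C ^ a * (R * 2 * j.factorial))
  refine Summable.of_nonneg_of_le (fun n => by unfold BB; positivity) (fun n => ?_) hs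
  unfold BB
  have h2 : ((n + a).factorial : ℝ) ≤ 2 ^ (n + a) * n.factorial * a.factorial := by
    have := Nat.choose_mul_factorial_mul_factorial (show a ≤ n + a by omega)
    rw [Nat.add_sub_cancel] at this
    rw [← this]
    push_cast
    have h : ((n + a).choose a : ℝ) ≤ 2 ^ (n + a) := by exact_mod_cast Nat.choose_le_two_pow (n + a) a
    calc ((n + a).choose a * a.factorial * n.factorial : ℝ) ≤ 2 ^ (n + a) * a.factorial * n.factorial := by gcongr
      _ = _ := by ring
  have h3 := fact_ineq n
  have hR' : 0 ≤ R := by linarith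
  calc _ ≤ ((2 ^ (n + a) * n.factorial * a.factorial) * C ^ (n + a)) * (R ^ (2 * n + 1) * (2 ^ (2 * n + 1) * j.factorial) / (n.factorial * n.factorial)) := by gcongr
    _ = _ := by
      have h8 : (8 : ℝ) ^ n = 2 ^ (n * 3) := by
        rw [mul_comm, pow_mul]; norm_num
      field_simp
      ring_nf
      rw [h8]
      ring

theorem TT_bound (a j n : ℕ) {R c : ℝ} (hR : 1 ≤ R) (hc : 0 < c) {q : ℝ × ℝ} (h1 : |q.1| ≤ R) (h2 : c ≤ q.2) :
    |TT a j n q| ≤ BB a j R (16 / c) n := by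
  unfold TT BB
  rw [abs_mul]
  have hq : 0 < q.2 := by linarith
  gcongr
  · refine (flat_bound _ (half_pos hq)).trans ?_
    have : Real.exp (-1 / (2 * (q.2 / 2) ^ 2)) ≤ 1 := by
      apply Real.exp_le_one_iff.mpr
      apply div_nonpos_of_nonpos_of_nonneg (by norm_num) (by positivity)
    calc _ ≤ (n + a).factorial * (8 / (q.2 / 2)) ^ (n + a) * 1 := by gcongr
      _ = (n + a).factorial * (16 / q.2) ^ (n + a) := by
        rw [mul_one]; congr 2; field_simp; norm_num
      _ ≤ _ := by gcongr
  · exact EE_bound _ _ hR h1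

theorem TT_fderiv (a j n : ℕ) {q : ℝ × ℝ} (hq : 0 < q.2) :
    HasFDerivAt (TT a j n) (TT a (j + 1) n q • ContinuousLinearMap.fst ℝ ℝ ℝ +
      (TT (a + 1) j n q / 2) • ContinuousLinearMap.snd ℝ ℝ ℝ) q := by
  have h1 : HasFDerivAt (fun q : ℝ × ℝ => EE (2 * n + 1) j q.1) _ q :=
    (EE_deriv (2 * n + 1) j q.1).comp_hasFDerivAt q (hasFDerivAt_fst (𝕜 := ℝ) (p := q))
  have h2 : HasDerivAt (fun t : ℝ => iteratedDeriv (n + a) flatF (t / 2)) _ q.2 :=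
    HasDerivAt.comp (h₂ := iteratedDeriv (n + a) flatF) (h := fun t : ℝ => t / 2) q.2
      (flat_hasDeriv (n + a) (half_pos hq)) ((hasDerivAt_id' q.2).div_const 2)
  have h3 : HasFDerivAt (fun q : ℝ × ℝ => iteratedDeriv (n + a) flatF (q.2 / 2)) _ q :=
    h2.comp_hasFDerivAt q (hasFDerivAt_snd (𝕜 := ℝ) (p := q))
  refine (h3.mul h1).congr_fderiv ?_
  ext <;> simp [TT, add_assoc]
  ring

noncomputable def WW (a j : ℕ) (q : ℝ × ℝ) : ℝ := ∑' n, TT a j n q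

theorem TT_summable (a j : ℕ) {q : ℝ × ℝ} (hq : 0 < q.2) : Summable (fun n => TT a j n q) :=
  Summable.of_norm_bounded (BB_summable a j (le_max_left 1 |q.1|) (by positivity))
    (fun n => TT_bound a j n (le_max_left 1 |q.1|) hq (le_max_right _ _) le_rfl)

theorem WW_fderiv (a j : ℕ) {q : ℝ × ℝ} (hq : 0 < q.2) :
    HasFDerivAt (WW a j) (WW a (j + 1) q • ContinuousLinearMap.fst ℝ ℝ ℝ +
      (WW (a + 1) j q / 2) • ContinuousLinearMap.snd ℝ ℝ ℝ) q := by
  set R := |q.1| + 1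
  have hR : 1 ≤ R := by simp [R]
  have hqR : |q.1| < R := by simp [R]
  set c := q.2 / 2
  have hc : 0 < c := half_pos hq
  have hcq : c < q.2 := half_lt_self hq
  have hs := (BB_summable a (j + 1) hR (C := 16 / c) (by positivity)).add
    (BB_summable (a + 1) j hR (C := 16 / c) (by positivity))
  have key := hasFDerivAt_tsum_of_isPreconnected (f := TT a j) (f' := fun n q => TT a (j + 1) n q • ContinuousLinearMap.fst ℝ ℝ ℝ +
      (TT (a + 1) j n q / 2) • ContinuousLinearMap.snd ℝ ℝ ℝ) (s := Metric.ball (0 : ℝ) R ×ˢ Set.Ioi c) (x₀ := q) (x := q)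
      hs (Metric.isOpen_ball.prod isOpen_Ioi) (((convex_ball 0 R).prod (convex_Ioi c)).isPreconnected)
      (fun n y hy => TT_fderiv a j n (hc.trans hy.2)) ?_ (by simp [hqR, hcq]) (TT_summable a j hq) (by simp [hqR, hcq])
  · refine key.congr_fderiv ?_
    have s1 := TT_summable a (j + 1) hq
    have s2 := TT_summable (a + 1) j hq
    rw [Summable.tsum_add (s1.smul_const _) ((s2.div_const 2).smul_const _), s1.tsum_smul_const,
      (s2.div_const 2).tsum_smul_const, tsum_div_const]
    rfl
  · intro n y hy
    have hy1 : |y.1| ≤ R := by simpa using (mem_ball_zero_iff.mp hy.1).le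
    have hy2 : c ≤ y.2 := le_of_lt hy.2
    have b1 := TT_bound a (j + 1) n hR hc hy1 hy2
    have b2 := TT_bound (a + 1) j n hR hc hy1 hy2
    refine (norm_add_le _ _).trans ?_
    rw [norm_smul, norm_smul, norm_div, Real.norm_eq_abs, Real.norm_eq_abs]
    have n1 := ContinuousLinearMap.norm_fst_le ℝ ℝ ℝ
    have n2 := ContinuousLinearMap.norm_snd_le ℝ ℝ ℝ
    have e1 := mul_le_of_le_one_right (abs_nonneg (TT a (j + 1) n y)) n1
    have e2 := mul_le_of_le_one_right (a := |TT (a + 1) j n y| / ‖(2 : ℝ)‖) (by positivity) n2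
    have e3 : |TT (a + 1) j n y| / ‖(2 : ℝ)‖ ≤ |TT (a + 1) j n y| := by
      rw [Real.norm_ofNat]; linarith [abs_nonneg (TT (a + 1) j n y)]
    linarith

theorem upper_open : IsOpen {q : ℝ × ℝ | 0 < q.2} := isOpen_lt continuous_const continuous_snd

theorem WW_contDiff (k : ℕ) : ∀ a j : ℕ, ContDiffOn ℝ k (WW a j) {q : ℝ × ℝ | 0 < q.2} := by
  induction k with
  | zero =>
    intro a j
    rw [Nat.cast_zero, contDiffOn_zero]
    intro q hq
    exact (WW_fderiv a j hq).continuousAt.continuousWithinAt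
  | succ k ih =>
    intro a j
    push_cast
    rw [contDiffOn_succ_iff_fderiv_of_isOpen upper_open]
    refine ⟨fun q hq => (WW_fderiv a j hq).differentiableAt.differentiableWithinAt, by simp, ?_⟩
    refine ContDiffOn.congr (f := fun q => WW a (j + 1) q • ContinuousLinearMap.fst ℝ ℝ ℝ +
      (WW (a + 1) j q / 2) • ContinuousLinearMap.snd ℝ ℝ ℝ) ?_ (fun q hq => (WW_fderiv a j hq).fderiv)
    exact ((ih a (j + 1)).smul contDiffOn_const).add (((ih (a + 1) j).div_const 2).smul contDiffOn_const)

theorem TT_eq (n : ℕ) (x t : ℝ) : TT 0 0 n (x, t) =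
    iteratedDeriv n flatF (t / 2) * x ^ (2 * n + 1) / ((2 * n + 1).factorial : ℝ) := by
  simp [TT, EE, mul_div_assoc]

theorem v_eq (x t : ℝ) : vTychonoff x t = WW 0 0 (x, t) := by
  unfold vTychonoff WW
  simp_rw [TT_eq]

theorem WW_dx (a j : ℕ) (x : ℝ) {t : ℝ} (ht : 0 < t) :
    HasDerivAt (fun y => WW a j (y, t)) (WW a (j + 1) (x, t)) x := by
  have h := (WW_fderiv a j (q := (x, t)) ht).comp_hasDerivAt x
    ((hasDerivAt_id x).prodMk (hasDerivAt_const x t))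
  refine h.congr_deriv ?_
  simp

theorem WW_dt (a j : ℕ) (x : ℝ) {t : ℝ} (ht : 0 < t) :
    HasDerivAt (fun s => WW a j (x, s)) (WW (a + 1) j (x, t) / 2) t := by
  have h := (WW_fderiv a j (q := (x, t)) ht).comp_hasDerivAt t
    ((hasDerivAt_const t x).prodMk (hasDerivAt_id t))
  refine h.congr_deriv ?_
  simp

theorem WW_shift (x : ℝ) {t : ℝ} (ht : 0 < t) : WW 0 2 (x, t) = WW 1 0 (x, t) := by
  unfold WW
  rw [(TT_summable 0 2 (q := (x, t)) ht).tsum_eq_zero_add]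
  have : TT 0 2 0 (x, t) = 0 := by simp [TT, EE]
  rw [this, zero_add]
  refine tsum_congr (fun n => ?_)
  unfold TT EE
  rw [if_pos (by omega), if_pos (by omega), show 2 * (n + 1) + 1 - 2 = 2 * n + 1 - 0 by omega]

theorem v_bound (x : ℝ) {t : ℝ} (ht : 0 < t) :
    |vTychonoff x t| ≤ |x| * Real.exp (16 * x ^ 2 * t⁻¹ - 2 * t⁻¹ ^ 2) := by
  have hs : HasSum (fun n : ℕ => |x| * Real.exp (- 2 * t⁻¹ ^ 2) * ((16 * x ^ 2 * t⁻¹) ^ n / n.factorial))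
      (|x| * Real.exp (- 2 * t⁻¹ ^ 2) * Real.exp (16 * x ^ 2 * t⁻¹)) := by
    have := NormedSpace.expSeries_div_hasSum_exp (16 * x ^ 2 * t⁻¹)
    rw [← Real.exp_eq_exp_ℝ] at this
    exact this.mul_left _
  have h := tsum_of_norm_bounded hs (f := fun n : ℕ =>
    iteratedDeriv n flatF (t / 2) * x ^ (2 * n + 1) / ((2 * n + 1).factorial : ℝ)) ?_
  · refine h.trans (le_of_eq ?_)
    rw [mul_assoc, ← Real.exp_add]
    congr 2
    ring
  · intro n
    rw [norm_div, norm_mul, Real.norm_eq_abs, Real.norm_eq_abs, RCLike.norm_natCast, abs_pow]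
    have h1 := flat_bound n (half_pos ht)
    have h2 := fact_ineq n
    calc _ ≤ (n.factorial * (8 / (t / 2)) ^ n * Real.exp (-1 / (2 * (t / 2) ^ 2))) * |x| ^ (2 * n + 1) / (n.factorial * n.factorial) := by
          gcongr
      _ = _ := by
          rw [show (-1 / (2 * (t / 2) ^ 2)) = -2 * t⁻¹ ^ 2 by field_simp,
            show 8 / (t / 2) = 16 * t⁻¹ by field_simp; norm_num, pow_succ |x| (2 * n), pow_mul |x|, sq_abs, mul_pow, mul_pow, mul_pow]
          field_simp

/-- the series Σₙ f⁽ⁿ⁾(t/2) x^{2n+1}/(2n+1)! converges for all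
(x,t) with t > 0, defines a smooth solution of v_t = ½ v_{xx}, vanishes at x = 0
for all t and as t → 0⁺ for each x, but is not identically zero. -/
theorem vTychonoff_nonuniqueness :
    (∀ x t : ℝ, 0 < t →
      Summable (fun n : ℕ =>
        iteratedDeriv n flatF (t / 2) * x ^ (2 * n + 1) / ((2 * n + 1).factorial : ℝ))) ∧
    ContDiffOn ℝ (⊤ : ℕ∞) (fun q : ℝ × ℝ => vTychonoff q.1 q.2) {q : ℝ × ℝ | 0 < q.2} ∧
    (∀ x t : ℝ, 0 < t →
      deriv (fun s => vTychonoff x s) t =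
        (1 / 2) * deriv (deriv (fun y => vTychonoff y t)) x) ∧
    (∀ t : ℝ, vTychonoff 0 t = 0) ∧
    (∀ x : ℝ, Filter.Tendsto (fun t => vTychonoff x t)
      (nhdsWithin 0 (Set.Ioi 0)) (nhds 0)) ∧
    (∃ x t : ℝ, 0 < t ∧ vTychonoff x t ≠ 0) := by
  refine ⟨?_, ?_, ?_, ?_, ?_, ?_⟩
  · intro x t ht
    have := TT_summable 0 0 (q := (x, t)) ht
    simpa only [TT_eq] using this
  · simp_rw [v_eq]
    rw [contDiffOn_infty]
    exact fun n => WW_contDiff n 0 0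
  · intro x t ht
    simp_rw [v_eq]
    rw [(WW_dt 0 0 x ht).deriv]
    have : deriv (fun y => WW 0 0 (y, t)) = fun y => WW 0 1 (y, t) := by
      ext y
      exact (WW_dx 0 0 y ht).deriv
    rw [this, (WW_dx 0 1 x ht).deriv, WW_shift x ht]
    ring
  · intro t
    simp [vTychonoff]
  · intro x
    apply squeeze_zero_norm' (a := fun t => |x| * Real.exp (16 * x ^ 2 * t⁻¹ - 2 * t⁻¹ ^ 2))
    · filter_upwards [self_mem_nhdsWithin] with t ht
      exact v_bound x ht
    · suffices h0 : Filter.Tendsto (fun t : ℝ => Real.exp (16 * x ^ 2 * t⁻¹ - 2 * t⁻¹ ^ 2))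
          (nhdsWithin 0 (Set.Ioi 0)) (nhds 0) by
        simpa using h0.const_mul |x|
      apply Real.tendsto_exp_atBot.comp
      have h1 : Filter.Tendsto (fun u : ℝ => 16 * x ^ 2 * u - 2 * u ^ 2) Filter.atTop Filter.atBot := by
        have h3 : Filter.Tendsto (fun u : ℝ => u * (2 * u - 16 * x ^ 2)) Filter.atTop Filter.atTop := by
          apply Filter.Tendsto.atTop_mul_atTop₀ Filter.tendsto_id
          apply Filter.tendsto_atTop_add_const_right
          exact Filter.Tendsto.const_mul_atTop (by norm_num) Filter.tendsto_id
        have := Filter.tendsto_neg_atTop_atBot.comp h3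
        refine this.congr (fun u => ?_)
        simp
        ring
      exact h1.comp tendsto_inv_nhdsGT_zero
  · by_contra! hcon
    have h := WW_dx 0 0 0 (t := 2) (by norm_num)
    have e : (fun y => WW 0 0 (y, (2 : ℝ))) = fun _ => 0 := by
      ext y
      rw [← v_eq]
      exact hcon y 2 (by norm_num)
    rw [e] at h
    have h2 := h.unique (hasDerivAt_const _ _)
    have h3 : WW 0 1 ((0 : ℝ), (2 : ℝ)) = flatF 1 := by
      unfold WW
      rw [tsum_eq_single 0]
      · simp [TT, EE]
      · intro n hn
        simp [TT, EE, hn]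
    rw [zero_add, h3] at h2
    simp [flatF] at h2
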